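/- Dobinski's formula: for every natural number n, the Bell number B_n satisfies B_n = e^{-1} ∑_{k=0}^∞ k^n / k!, the series on the right being convergent. -/

import Mathlib

/-- The Bell numbers: `bell 0 = 1` and `bell (n+1) = ∑_{k=0}^{n} (n choose k) * bell k`. -/
def bell : ℕ → ℕ
  | 0 => 1
  | n + 1 => ∑ k ∈ (Finset.range (n + 1)).attach, Nat.choose n k.1 * bell k.1
decreasing_by exact Finset.mem_range.mp k.2

/-! For the exponent `n + 1` the series `∑ₖ kⁿ⁺¹ xᵏ / k!` has no `k = 0` term; cancelling one factor
`k` against `k!`, shifting the index and expanding `(k + 1)ⁿ` expresses its sum through the sums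
for the exponents `m ≤ n`. At `x = 1` this is the recurrence of the Bell numbers, and the series
for the exponent `0` is `e`. -/

open Finset
open scoped Nat

theorem bell_zero : bell 0 = 1 := by
  rw [bell]

theorem bell_succ (n : ℕ) : bell (n + 1) = ∑ m ∈ range (n + 1), n.choose m * bell m := by
  rw [bell]
  exact sum_attach (range (n + 1)) fun m => n.choose m * bell m

section PowerMoments

variable {K : Type*} [Semifield K] [CharZero K]

theorem succ_pow_succ_mul_pow_succ_div_factorial_succ (x : K) (n k : ℕ) :
    ((k + 1 : ℕ) : K) ^ (n + 1) * x ^ (k + 1) / (k + 1)! =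
      x * ∑ m ∈ range (n + 1), (n.choose m : K) * ((k : K) ^ m * x ^ k / k !) := by
  have succ_ne_zero : ((k + 1 : ℕ) : K) ≠ 0 := Nat.cast_ne_zero.mpr k.succ_ne_zero
  have binomial : ((k + 1 : ℕ) : K) ^ n = ∑ m ∈ range (n + 1), (n.choose m : K) * (k : K) ^ m := by
    simp [add_pow, mul_comm]
  calc
    ((k + 1 : ℕ) : K) ^ (n + 1) * x ^ (k + 1) / (k + 1)!
      = ((k + 1 : ℕ) : K) * (((k + 1 : ℕ) : K) ^ n * x ^ (k + 1)) / (((k + 1 : ℕ) : K) * k !) := by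
        rw [Nat.factorial_succ, Nat.cast_mul, pow_succ', mul_assoc]
    _ = ((k + 1 : ℕ) : K) ^ n * x ^ (k + 1) / k ! := mul_div_mul_left _ _ succ_ne_zero
    _ = x * (((k + 1 : ℕ) : K) ^ n * (x ^ k / k !)) := by ring
    _ = x * ∑ m ∈ range (n + 1), (n.choose m : K) * ((k : K) ^ m * x ^ k / k !) := by
        simp only [binomial, sum_mul, mul_assoc, mul_div_assoc]

theorem hasSum_pow_succ_mul_pow_div_factorial [TopologicalSpace K] [IsTopologicalSemiring K]
    {x : K} {n : ℕ} {a : ℕ → K}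
    (ha : ∀ m ≤ n, HasSum (fun k : ℕ => (k : K) ^ m * x ^ k / k !) (a m)) :
    HasSum (fun k : ℕ => (k : K) ^ (n + 1) * x ^ k / k !)
      (x * ∑ m ∈ range (n + 1), (n.choose m : K) * a m) := by
  have shifted : HasSum (fun k : ℕ => ((k + 1 : ℕ) : K) ^ (n + 1) * x ^ (k + 1) / (k + 1)!)
      (x * ∑ m ∈ range (n + 1), (n.choose m : K) * a m) := by
    simp only [succ_pow_succ_mul_pow_succ_div_factorial_succ]
    exact (hasSum_sum fun m hm => (ha m (mem_range_succ_iff.mp hm)).mul_left _).mul_left x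
  refine (Nat.succ_injective.hasSum_iff fun k hk => ?_).mp shifted
  obtain rfl : k = 0 := by simpa [Nat.range_succ] using hk
  simp

end PowerMoments

theorem hasSum_pow_div_factorial_bell (n : ℕ) :
    HasSum (fun k : ℕ => (k : ℝ) ^ n / k !) (bell n * Real.exp 1) := by
  induction n using Nat.strong_induction_on with
  | _ n ih =>
    cases n with
    | zero =>
      simpa [bell_zero, Real.exp_eq_exp_ℝ] using NormedSpace.expSeries_div_hasSum_exp (1 : ℝ)
    | succ n =>
      have recurrence := hasSum_pow_succ_mul_pow_div_factorial (x := (1 : ℝ)) (n := n)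
        (a := fun m => bell m * Real.exp 1)
        fun m hm => by simpa using ih m (Nat.lt_succ_of_le hm)
      simpa [bell_succ, sum_mul, mul_assoc] using recurrence

/-- Dobinski's formula: for every `n`, the series `∑ₖ kⁿ / k!` converges and
`Bₙ = e⁻¹ ∑ₖ kⁿ / k!`. -/
theorem dobinski (n : ℕ) :
    Summable (fun k : ℕ => (k : ℝ) ^ n / (Nat.factorial k)) ∧
      (bell n : ℝ) = Real.exp (-1) * ∑' k : ℕ, (k : ℝ) ^ n / (Nat.factorial k) := by
  have series := hasSum_pow_div_factorial_bell n
  refine ⟨series.summable, ?_⟩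
  rw [series.tsum_eq, mul_left_comm, ← Real.exp_add, neg_add_cancel, Real.exp_zero, mul_one]
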